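/- Let n ≥ 1 and let a_1, …, a_n : ℝ → ℝ be functions of class C^n. Suppose that for every t ∈ ℝ the monic polynomial P(t)(x) = x^n + Σ_{j=1}^n (-1)^j a_j(t) x^{n-j} is hyperbolic, i.e. all its complex roots are real. Then there exist functions λ_1, …, λ_n : ℝ → ℝ of class C^1 such that for every t ∈ ℝ one has P(t)(x) = ∏_{j=1}^n (x - λ_j(t)) for all x. -/

import Mathlib

/-!
A parametrization of the roots is first chosen differentiable, and is then automatically of class
`C^1`.

Order the roots increasingly. At a point `t₀`, the roots which agree with `ρ` at `t₀` have bounded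
difference quotients, and Taylor's formula for `t ↦ P(t)(ρ + μ (t - t₀))` shows that the polynomial
in `μ` whose roots are these difference quotients converges as `t → t₀`. So one-sided derivatives
exist, and those from the left are a permutation of those from the right. Finitely many such
permutations are easily realised by one selection of the roots; by Tychonoff's theorem they can all
be realised at once, which gives differentiable roots.

Now let the roots `f i` be differentiable and let `μ` avoid their derivatives at `t₀`; subtracting
`μ t` we may take `μ = 0`. The `m` roots which agree with `c₀` at `t₀` cross every level `c` close
to `c₀`. If one of them were critical near `t₀` on its level `c`, then `t ↦ ∏ i, (c - f i t)` would
have `m + 1` zeros near `t₀`, counted with multiplicity, and Rolle's theorem would give a nearby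
zero of its `m`-th derivative, which is impossible since that derivative is nonzero at `t₀` for
`c = c₀`. So the derivatives avoid `μ` near `t₀`, and by Darboux's theorem they are continuous.
-/

open Filter Topology Asymptotics Set
open Equiv (Perm)

section OrderOfVanishing

variable {F : ℝ → ℝ} {m : ℕ} {z : ℝ}

lemma tendsto_div_pow_of_iteratedDeriv_eq_zero (hF : ContDiff ℝ m F)
    (h : ∀ j < m, iteratedDeriv j F z = 0) :
    Tendsto (fun t => F t / (t - z) ^ m) (𝓝[≠] z) (𝓝 (iteratedDeriv m F z / m.factorial)) := by
  have htaylor (t : ℝ) :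
      taylorWithinEval F m univ z t = iteratedDeriv m F z / m.factorial * (t - z) ^ m := by
    rw [taylor_within_apply, Finset.sum_range_succ, Finset.sum_eq_zero fun k hk => ?_]
    · simp only [iteratedDerivWithin_univ, smul_eq_mul, zero_add]
      ring
    · rw [iteratedDerivWithin_univ, h k (Finset.mem_range.1 hk), smul_zero]
  have hrem := ((taylor_isLittleO_univ (x₀ := z) hF).mono
    (nhdsWithin_le_nhds (s := {z}ᶜ))).tendsto_div_nhds_zero
  simp only [htaylor] at hrem
  refine (zero_add (iteratedDeriv m F z / m.factorial) ▸ hrem.add_const _).congr' ?_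
  filter_upwards [self_mem_nhdsWithin] with t ht
  have : t - z ≠ 0 := sub_ne_zero.2 ht
  field_simp
  ring

lemma iteratedDeriv_eq_zero_of_isBigO (hF : ContDiff ℝ m F)
    (h : F =O[𝓝[≠] z] fun t => (t - z) ^ m) : ∀ j < m, iteratedDeriv j F z = 0 := by
  intro j
  induction j using Nat.strong_induction_on with
  | _ j ih =>
  intro hj
  have hlim := tendsto_div_pow_of_iteratedDeriv_eq_zero (hF.of_le (by exact_mod_cast hj.le))
    fun i hi => ih i hi (hi.trans hj)
  have hsub : Tendsto (fun t => t - z) (𝓝[≠] z) (𝓝 0) :=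
    tendsto_sub_nhds_zero_iff.2 nhdsWithin_le_nhds
  have hzero : Tendsto (fun t => F t / (t - z) ^ j) (𝓝[≠] z) (𝓝 0) :=
    (h.trans_isLittleO ((isLittleO_pow_pow hj).comp_tendsto hsub)).tendsto_div_nhds_zero
  have hfact : (j.factorial : ℝ) ≠ 0 := by exact_mod_cast j.factorial_ne_zero
  simpa [hfact] using tendsto_nhds_unique hlim hzero

end OrderOfVanishing

section Rolle

/-- `F` vanishes, with multiplicities, at the points `x 0 ≤ … ≤ x K`: a value attained by
`k + 1` consecutive points is a zero of `F` of order at least `k + 1`. -/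
def VanishesAlong (F : ℝ → ℝ) (x : ℕ → ℝ) (K : ℕ) : Prop :=
  ∀ i k, i + k ≤ K → x i = x (i + k) → iteratedDeriv k F (x i) = 0

variable {F : ℝ → ℝ} {x : ℕ → ℝ} {K : ℕ}

lemma VanishesAlong.exists_deriv_eq_zero (h : VanishesAlong F x (K + 1)) (hF : Continuous F)
    (hx : Monotone x) {i : ℕ} (hi : i ≤ K) :
    ∃ y ∈ Icc (x i) (x (i + 1)), deriv F y = 0 ∧
      (x i < x (i + 1) → y ∈ Ioo (x i) (x (i + 1))) := by
  rcases (hx i.le_succ).lt_or_eq with hlt | heq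
  · have hzero (j : ℕ) (hj : j ≤ K + 1) : F (x j) = 0 := h j 0 hj rfl
    obtain ⟨y, hy, hy'⟩ := _root_.exists_deriv_eq_zero hlt hF.continuousOn
      ((hzero i (by lia)).trans (hzero (i + 1) (by lia)).symm)
    exact ⟨y, Ioo_subset_Icc_self hy, hy', fun _ => hy⟩
  · exact ⟨x i, ⟨le_rfl, heq.le⟩, by simpa only [iteratedDeriv_one] using h i 1 (by lia) heq,
      fun hlt => absurd heq hlt.ne⟩

lemma VanishesAlong.exists_deriv (h : VanishesAlong F x (K + 1)) (hF : Continuous F)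
    (hx : Monotone x) :
    ∃ y : ℕ → ℝ, Monotone y ∧ (∀ i, y i ∈ Icc (x i) (x (i + 1))) ∧
      VanishesAlong (deriv F) y K := by
  have hex (i : ℕ) : ∃ y ∈ Icc (x i) (x (i + 1)),
      i ≤ K → deriv F y = 0 ∧ (x i < x (i + 1) → y ∈ Ioo (x i) (x (i + 1))) := by
    by_cases hi : i ≤ K
    · obtain ⟨y, hy, hy'⟩ := h.exists_deriv_eq_zero hF hx hi
      exact ⟨y, hy, fun _ => hy'⟩
    · exact ⟨x i, left_mem_Icc.2 (hx i.le_succ), fun h => absurd h hi⟩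
  choose y hy hyK using hex
  refine ⟨y, monotone_nat_of_le_succ fun i => (hy i).2.trans (hy (i + 1)).1, hy, ?_⟩
  intro i k hik hyy
  rcases Nat.eq_zero_or_pos k with rfl | hk
  · exact (hyK i hik).1
  -- If `y i = … = y (i + k)`, then all of `x i, …, x (i + k + 1)` coincide.
  have hmid : x (i + 1) ≤ x (i + k) := hx (by lia)
  have hleft : x i = x (i + 1) := (hx i.le_succ).eq_of_not_lt fun hlt => by
    linarith [((hyK i (by lia)).2 hlt).2, (hy (i + k)).1]
  have hright : x (i + k) = x (i + k + 1) := (hx (i + k).le_succ).eq_of_not_lt fun hlt => by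
    linarith [((hyK (i + k) hik).2 hlt).1, (hy i).2]
  have hyi : y i = x i := le_antisymm (hleft ▸ (hy i).2) (hy i).1
  rw [← iteratedDeriv_succ', hyi]
  refine h i (k + 1) (by lia) ?_
  rw [← add_assoc]
  linarith [(hy i).2, (hy (i + k)).1]

theorem VanishesAlong.exists_iteratedDeriv_eq_zero (h : VanishesAlong F x K)
    (hF : ContDiff ℝ K F) (hx : Monotone x) :
    ∃ ξ ∈ Icc (x 0) (x K), iteratedDeriv K F ξ = 0 := by
  induction K generalizing F x with
  | zero => exact ⟨x 0, ⟨le_rfl, le_rfl⟩, h 0 0 le_rfl rfl⟩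
  | succ K ih =>
    have hdF : ContDiff ℝ K (deriv F) :=
      (contDiff_succ_iff_deriv.1 (by exact_mod_cast hF : ContDiff ℝ ((K : WithTop ℕ∞) + 1) F)).2.2
    obtain ⟨y, hymono, hyx, hy⟩ := h.exists_deriv hF.continuous hx
    obtain ⟨ξ, hξ, hzero⟩ := ih hy hdF hymono
    exact ⟨ξ, ⟨(hyx 0).1.trans hξ.1, hξ.2.trans (hyx K).2⟩, by rwa [iteratedDeriv_succ']⟩

theorem exists_iteratedDeriv_eq_zero_of_card {α : Type*} {m : ℕ} (hF : ContDiff ℝ m F)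
    {Z : Finset α} (hZ : Z.card = m + 1) (τ : α → ℝ) {s : Set ℝ} [s.OrdConnected]
    (hs : ∀ p ∈ Z, τ p ∈ s)
    (hzero : ∀ z, ∀ j < (Z.filter (τ · = z)).card, iteratedDeriv j F z = 0) :
    ∃ ξ ∈ s, iteratedDeriv m F ξ = 0 := by
  classical
  let e : Fin (m + 1) ≃ Z := (Z.equivFinOfCardEq hZ).symm
  let sort := Tuple.sort fun k => τ (e k)
  let u (k : ℕ) : Z := e (sort ⟨min k m, by lia⟩)
  have hu : Monotone fun k => τ (u k) := fun k l hkl =>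
    Tuple.monotone_sort (fun k => τ (e k)) (Fin.mk_le_mk.2 (min_le_min_right m hkl))
  have hvan : VanishesAlong F (fun k => τ (u k)) m := by
    intro i k hik huu
    refine hzero _ _ (Nat.succ_le_iff.1 ?_)
    rw [← Finset.card_range k.succ]
    refine Finset.card_le_card_of_injOn (fun j => (u (i + j) : α)) (fun j hj => ?_)
      fun j hj l hl hjl => ?_
    · have hj : j < k + 1 := by simpa using hj
      simp only [Finset.coe_filter, Set.mem_ofPred_eq, Finset.coe_mem, true_and]
      exact le_antisymm ((hu (by lia : i + j ≤ i + k)).trans huu.ge) (hu (by lia))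
    · have hj : j < k + 1 := by simpa using hj
      have hl : l < k + 1 := by simpa using hl
      have := sort.injective (e.injective (Subtype.ext hjl))
      simp only [Fin.mk.injEq] at this
      lia
  obtain ⟨ξ, hξ, hξ0⟩ := hvan.exists_iteratedDeriv_eq_zero hF hu
  exact ⟨ξ, OrdConnected.out ‹_› (hs _ (u 0).2) (hs _ (u m).2) hξ, hξ0⟩

end Rolle

lemma continuous_iteratedDeriv_snd {E : Type*} [NormedAddCommGroup E] [NormedSpace ℝ E] {m : ℕ}
    {Φ : E × ℝ → ℝ} (hΦ : ContDiff ℝ m Φ) :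
    Continuous fun q : E × ℝ => iteratedDeriv m (fun t => Φ (q.1, t)) q.2 := by
  induction m generalizing Φ with
  | zero => simpa using hΦ.continuous
  | succ m ih =>
    have hderiv (c : E) : deriv (fun t => Φ (c, t)) = fun t => fderiv ℝ Φ (c, t) (0, 1) := by
      ext t
      have hpath : HasDerivAt (fun t : ℝ => (c, t)) ((0 : E), (1 : ℝ)) t :=
        (hasDerivAt_const t c).prodMk (hasDerivAt_id t)
      exact ((hΦ.differentiable (by simp) (c, t)).hasFDerivAt.comp_hasDerivAt t hpath).deriv
    simp only [iteratedDeriv_succ', hderiv]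
    exact ih ((hΦ.fderiv_right (m := m) (by norm_cast)).clm_apply contDiff_const)

section DifferentiableRoots

variable {ι : Type*} [Fintype ι] {f : ι → ℝ → ℝ} {c z : ℝ}

lemma tendsto_prod_sub_div_pow {d : ι → ℝ} (hd : ∀ i, HasDerivAt (f i) (d i) z) :
    Tendsto (fun t => (∏ i, (c - f i t)) / (t - z) ^ (Finset.univ.filter (f · z = c)).card)
      (𝓝[≠] z) (𝓝 ((∏ i with f i z = c, -d i) * ∏ i with f i z ≠ c, (c - f i z))) := by
  have hcluster : Tendsto (fun t => ∏ i with f i z = c, -slope (f i) z t) (𝓝[≠] z)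
      (𝓝 (∏ i with f i z = c, -d i)) :=
    tendsto_finsetProd _ fun i _ => (hasDerivAt_iff_tendsto_slope.1 (hd i)).neg
  have hrest : Tendsto (fun t => ∏ i with f i z ≠ c, (c - f i t)) (𝓝[≠] z)
      (𝓝 (∏ i with f i z ≠ c, (c - f i z))) :=
    tendsto_finsetProd _ fun i _ =>
      ((hd i).continuousAt.tendsto.mono_left nhdsWithin_le_nhds).const_sub c
  refine (hcluster.mul hrest).congr' (.of_forall fun t => ?_)
  beta_reduce
  rw [← Finset.prod_filter_mul_prod_filter_not Finset.univ (f · z = c), mul_div_right_comm,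
    ← Finset.prod_const, ← Finset.prod_div_distrib]
  refine congrArg (· * _) (Finset.prod_congr rfl fun i hi => ?_)
  rw [slope_def_field, (Finset.mem_filter.1 hi).2, ← neg_div, neg_sub]

lemma iteratedDeriv_prod_sub_eq_zero (hd : ∀ i, DifferentiableAt ℝ (f i) z)
    (hF : ContDiff ℝ (Fintype.card ι) fun t => ∏ i, (c - f i t)) {j : ℕ}
    (hj : j < (Finset.univ.filter (f · z = c)).card) :
    iteratedDeriv j (fun t => ∏ i, (c - f i t)) z = 0 := by
  refine iteratedDeriv_eq_zero_of_isBigO (hF.of_le (by exact_mod_cast Finset.card_le_univ _))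
    (isBigO_of_div_tendsto_nhds ?_ _ (tendsto_prod_sub_div_pow fun i => (hd i).hasDerivAt)) j hj
  filter_upwards [self_mem_nhdsWithin] with t ht h
  exact absurd h (pow_ne_zero _ (sub_ne_zero.2 ht))

lemma iteratedDeriv_card_prod_sub_eq_zero_iff (hd : ∀ i, DifferentiableAt ℝ (f i) z)
    (hF : ContDiff ℝ (Fintype.card ι) fun t => ∏ i, (c - f i t)) :
    iteratedDeriv (Finset.univ.filter (f · z = c)).card (fun t => ∏ i, (c - f i t)) z = 0 ↔
      ∃ i, f i z = c ∧ deriv (f i) z = 0 := by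
  have hlim := tendsto_nhds_unique
    (tendsto_div_pow_of_iteratedDeriv_eq_zero (hF.of_le (by exact_mod_cast Finset.card_le_univ _))
      fun j hj => iteratedDeriv_prod_sub_eq_zero hd hF hj)
    (tendsto_prod_sub_div_pow fun i => (hd i).hasDerivAt)
  have hrest : ∏ i with f i z ≠ c, (c - f i z) ≠ 0 :=
    Finset.prod_ne_zero_iff.2 fun i hi => sub_ne_zero.2 (Finset.mem_filter.1 hi).2.symm
  rw [div_eq_iff (Nat.cast_ne_zero.2 (Nat.factorial_ne_zero _))] at hlim
  rw [hlim, mul_eq_zero_iff_right (Nat.cast_ne_zero.2 (Nat.factorial_ne_zero _)),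
    mul_eq_zero_iff_right hrest, Finset.prod_eq_zero_iff]
  simp only [Finset.mem_filter, Finset.mem_univ, true_and, neg_eq_zero]

-- The extra zero at `t₁`, where `f i₀` is critical, makes the number of zeros exceed `G.card`.
lemma exists_iteratedDeriv_prod_sub_eq_zero (hd : ∀ i, Differentiable ℝ (f i))
    (hF : ContDiff ℝ (Fintype.card ι) fun t => ∏ i, (c - f i t)) {s : Set ℝ} [s.OrdConnected]
    {G : Finset ι} (hG : ∀ i ∈ G, ∃ t ∈ s, f i t = c) {i₀ : ι} {t₁ : ℝ} (ht₁ : t₁ ∈ s)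
    (hf : f i₀ t₁ = c) (hcrit : deriv (f i₀) t₁ = 0) :
    ∃ ξ ∈ s, iteratedDeriv G.card (fun t => ∏ i, (c - f i t)) ξ = 0 := by
  choose! τ hτs hτ using hG
  refine exists_iteratedDeriv_eq_zero_of_card (Z := G.insertNone)
    (hF.of_le (by exact_mod_cast G.card_le_univ)) (Finset.card_insertNone G) (·.elim t₁ τ)
    (Finset.forall_mem_insertNone.2 ⟨ht₁, hτs⟩) fun z j hj => ?_
  have hcount : (G.filter (τ · = z)).card ≤ (Finset.univ.filter (f · z = c)).card := by
    refine Finset.card_le_card fun i hi => ?_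
    obtain ⟨hiG, rfl⟩ := Finset.mem_filter.1 hi
    simpa only [Finset.mem_filter, Finset.mem_univ, true_and] using hτ i hiG
  have hsplit : (G.insertNone.filter (fun o => o.elim t₁ τ = z)).card =
      (if t₁ = z then 1 else 0) + (G.filter (τ · = z)).card := by
    rw [Finset.card_filter, Finset.card_filter, Finset.sum_insertNone]
    rfl
  by_cases hz : t₁ = z
  · subst hz
    rw [hsplit, if_pos rfl] at hj
    rcases (by lia : j < (Finset.univ.filter (f · t₁ = c)).card ∨
      j = (Finset.univ.filter (f · t₁ = c)).card) with hlt | rfl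
    · exact iteratedDeriv_prod_sub_eq_zero (fun i => hd i t₁) hF hlt
    · exact (iteratedDeriv_card_prod_sub_eq_zero_iff (fun i => hd i t₁) hF).2 ⟨i₀, hf, hcrit⟩
  · rw [hsplit, if_neg hz] at hj
    exact iteratedDeriv_prod_sub_eq_zero (fun i => hd i z) hF (by lia)

lemma nhds_le_map_nhds_of_deriv_pos {g : ℝ → ℝ} (hg : Continuous g) (hd : 0 < deriv g z) :
    𝓝 (g z) ≤ map g (𝓝 z) := by
  intro s hs
  obtain ⟨a, b, hab, hs⟩ := mem_nhds_iff_exists_Ioo_subset.1 (mem_map.1 hs)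
  have hslope : ∀ᶠ t in 𝓝[≠] z, 0 < slope g z t :=
    (hasDerivAt_iff_tendsto_slope.1 (differentiableAt_of_deriv_ne_zero
      hd.ne').hasDerivAt).eventually (lt_mem_nhds hd)
  obtain ⟨u, hu, hau⟩ := ((hslope.filter_mono (nhdsLT_le_nhdsNE z)).and
    (Ioo_mem_nhdsLT hab.1)).exists
  obtain ⟨v, hv, hvb⟩ := ((hslope.filter_mono (nhdsGT_le_nhdsNE z)).and
    (Ioo_mem_nhdsGT hab.2)).exists
  have hgu : g u < g z := (slope_pos_iff_gt hau.2).1 hu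
  have hgv : g z < g v := (slope_pos_iff hvb.1).1 hv
  refine mem_of_superset (Icc_mem_nhds hgu hgv) fun y hy => ?_
  obtain ⟨t, ht, rfl⟩ := intermediate_value_Icc (hau.2.trans hvb.1).le hg.continuousOn hy
  exact hs ⟨hau.1.trans_le ht.1, ht.2.trans_lt hvb.2⟩

lemma nhds_le_map_nhds_of_deriv_ne_zero {g : ℝ → ℝ} (hg : Continuous g) (hd : deriv g z ≠ 0) :
    𝓝 (g z) ≤ map g (𝓝 z) := by
  rcases hd.lt_or_gt with hneg | hpos
  · have hneg' := map_mono (m := Neg.neg) (nhds_le_map_nhds_of_deriv_pos (g := -g) hg.neg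
      (by rwa [deriv.neg, Left.neg_pos_iff]))
    have hmap : map Neg.neg (𝓝 (-g z)) = 𝓝 (- -g z) := (Homeomorph.neg ℝ).map_nhds_eq _
    simpa [Filter.map_map, Function.comp_def, hmap] using hneg'
  · exact nhds_le_map_nhds_of_deriv_pos hg hpos

lemma eventually_deriv_ne_zero_of_contDiff_prod_sub (hd : ∀ i, Differentiable ℝ (f i))
    (hΦ : ContDiff ℝ (Fintype.card ι) fun q : ℝ × ℝ => ∏ i, (q.1 - f i q.2)) {i₀ : ι} {t₀ : ℝ}
    (hne : ∀ i, f i t₀ = f i₀ t₀ → deriv (f i) t₀ ≠ 0) : ∀ᶠ t in 𝓝 t₀, deriv (f i₀) t ≠ 0 := by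
  have hF (c : ℝ) : ContDiff ℝ (Fintype.card ι) fun t => ∏ i, (c - f i t) :=
    hΦ.comp (contDiff_const.prodMk contDiff_id)
  set G := Finset.univ.filter (f · t₀ = f i₀ t₀)
  have hnonzero : iteratedDeriv G.card (fun t => ∏ i, (f i₀ t₀ - f i t)) t₀ ≠ 0 := fun h =>
    let ⟨i, hiG, hi⟩ := (iteratedDeriv_card_prod_sub_eq_zero_iff (fun i => hd i t₀) (hF _)).1 h
    hne i hiG hi
  have hnear : ∀ᶠ q in 𝓝 (f i₀ t₀, t₀),
      iteratedDeriv G.card (fun t => ∏ i, (q.1 - f i t)) q.2 ≠ 0 :=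
    (continuous_iteratedDeriv_snd (hΦ.of_le (by exact_mod_cast G.card_le_univ))).continuousAt
      |>.eventually_ne hnonzero
  rw [nhds_prod_eq] at hnear
  obtain ⟨pc, hpc, pt, hpt, hnear⟩ := eventually_prod_iff.1 hnear
  obtain ⟨ε, hε, hball⟩ := Metric.eventually_nhds_iff_ball.1 hpt
  have : (Metric.ball t₀ ε).OrdConnected := (convex_ball t₀ ε).ordConnected
  have hcross : ∀ᶠ c in 𝓝 (f i₀ t₀), ∀ i ∈ G, ∃ t ∈ Metric.ball t₀ ε, f i t = c := by
    refine (eventually_all_finset G).2 fun i hi => ?_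
    have hi : f i t₀ = f i₀ t₀ := (Finset.mem_filter.1 hi).2
    rw [← hi]
    exact nhds_le_map_nhds_of_deriv_ne_zero (hd i).continuous (hne i hi)
      (image_mem_map (Metric.ball_mem_nhds t₀ hε))
  filter_upwards [(hd i₀).continuous.tendsto t₀ (hcross.and hpc), Metric.ball_mem_nhds t₀ hε]
    with t₁ ⟨hcross, hc⟩ ht₁ hcrit
  obtain ⟨ξ, hξ, hzero⟩ := exists_iteratedDeriv_prod_sub_eq_zero hd (hF _) hcross ht₁ rfl hcrit
  exact hnear hc (hball ξ hξ) hzero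

lemma eventually_deriv_ne_of_contDiff_prod_sub (hd : ∀ i, Differentiable ℝ (f i))
    (hΦ : ContDiff ℝ (Fintype.card ι) fun q : ℝ × ℝ => ∏ i, (q.1 - f i q.2)) {i₀ : ι} {t₀ μ : ℝ}
    (hne : ∀ i, deriv (f i) t₀ ≠ μ) : ∀ᶠ t in 𝓝 t₀, deriv (f i₀) t ≠ μ := by
  have hlin (t : ℝ) : HasDerivAt (fun t => μ * t) μ t := by
    simpa using (hasDerivAt_id t).const_mul μ
  have hderiv (i : ι) (t : ℝ) : HasDerivAt (fun t => f i t - μ * t) (deriv (f i) t - μ) t :=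
    (hd i t).hasDerivAt.sub (hlin t)
  have hΦμ : ContDiff ℝ (Fintype.card ι) fun q : ℝ × ℝ => ∏ i, (q.1 - (f i q.2 - μ * q.2)) := by
    have hshear : ContDiff ℝ (Fintype.card ι) fun q : ℝ × ℝ => (q.1 + μ * q.2, q.2) := by fun_prop
    simpa only [Function.comp_def, sub_sub_eq_add_sub] using hΦ.comp hshear
  have hshifted := eventually_deriv_ne_zero_of_contDiff_prod_sub (i₀ := i₀) (t₀ := t₀)
    (fun i t => (hderiv i t).differentiableAt) hΦμ fun i _ => by
      rw [(hderiv i t₀).deriv]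
      exact sub_ne_zero.2 (hne i)
  filter_upwards [hshifted] with t ht
  rwa [(hderiv i₀ t).deriv, sub_ne_zero] at ht

theorem contDiff_one_of_contDiff_prod_sub (hd : ∀ i, Differentiable ℝ (f i))
    (hΦ : ContDiff ℝ (Fintype.card ι) fun q : ℝ × ℝ => ∏ i, (q.1 - f i q.2)) (i₀ : ι) :
    ContDiff ℝ 1 (f i₀) := by
  rw [contDiff_one_iff_deriv]
  refine ⟨hd i₀, continuous_iff_continuousAt.2 fun t₀ => ?_⟩
  have havoid {a b : ℝ} (hab : a < b) : ∃ μ ∈ Ioo a b, ∀ᶠ t in 𝓝 t₀, deriv (f i₀) t ≠ μ := by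
    obtain ⟨μ, hμ, hμd⟩ :=
      ((Ioo_infinite hab).sdiff (finite_range fun i => deriv (f i) t₀)).nonempty
    exact ⟨μ, hμ, eventually_deriv_ne_of_contDiff_prod_sub hd hΦ fun i hi => hμd ⟨i, hi⟩⟩
  -- By Darboux, `deriv (f i₀)` stays on one side of the avoided value.
  have hside {μ : ℝ} (hμ : ∀ᶠ t in 𝓝 t₀, deriv (f i₀) t ≠ μ) :
      (∀ᶠ t in 𝓝 t₀, deriv (f i₀) t < μ) ∨ ∀ᶠ t in 𝓝 t₀, μ < deriv (f i₀) t := by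
    obtain ⟨ε, hε, hball⟩ := Metric.eventually_nhds_iff_ball.1 hμ
    exact (hasDerivWithinAt_forall_lt_or_forall_gt_of_forall_ne (convex_ball t₀ ε)
      (fun t _ => (hd i₀ t).hasDerivAt.hasDerivWithinAt) hball).imp
      (mem_of_superset (Metric.ball_mem_nhds t₀ hε)) (mem_of_superset (Metric.ball_mem_nhds t₀ hε))
  refine tendsto_order.2 ⟨fun b hb => ?_, fun b hb => ?_⟩
  · obtain ⟨μ, hμ, hne⟩ := havoid hb
    rcases hside hne with hlt | hgt
    · exact absurd hlt.self_of_nhds hμ.2.not_gt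
    · exact hgt.mono fun t => hμ.1.trans
  · obtain ⟨μ, hμ, hne⟩ := havoid hb
    rcases hside hne with hlt | hgt
    · exact hlt.mono fun t ht => ht.trans hμ.2
    · exact absurd hgt.self_of_nhds hμ.1.not_gt

end DifferentiableRoots

section Selection

-- `σ` is locally constant off `T` and picks up the factor `τ b` just after each `b ∈ T`.
lemma exists_perm_path {α ι : Type*} [LinearOrder α] (τ : α → Perm ι) (T : Finset α) :
    ∃ σ : α → Perm ι, ∀ s t, s < t → ∀ {β : Type*} (c : ι → β),
      (∀ b ∈ T, b ∈ Ioo s t → c ∘ τ b = c) →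
        c ∘ σ t = c ∘ (if s ∈ T then τ s else 1 : Perm ι) ∘ σ s := by
  induction T using Finset.induction_on_max with
  | empty => exact ⟨fun _ => 1, fun _ _ _ _ _ _ => rfl⟩
  | insert b T hb ih =>
    obtain ⟨σ, hσ⟩ := ih
    refine ⟨fun t => if b < t then τ b * σ b else σ t, fun s t hst β c hc => ?_⟩
    have hcT (u : α) (hu : u ≤ t) : ∀ b ∈ T, b ∈ Ioo s u → c ∘ τ b = c := fun b hb hbu =>
      hc b (Finset.mem_insert_of_mem hb) ⟨hbu.1, hbu.2.trans_le hu⟩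
    rcases le_or_gt t b with htb | hbt
    · simpa [htb.not_gt, (hst.trans_le htb).not_gt, (hst.trans_le htb).ne] using
        hσ s t hst c (hcT t le_rfl)
    rcases lt_trichotomy s b with hsb | rfl | hbs
    · have hτb : c ∘ τ b ∘ σ b = c ∘ σ b :=
        congrArg (· ∘ σ b) (hc b (Finset.mem_insert_self b T) ⟨hsb, hbt⟩)
      simpa [hbt, hsb.not_gt, hsb.ne, hτb] using hσ s b hsb c (hcT b hbt.le)
    · simp [hbt]
    · have hsT : s ∉ insert b T := fun hs =>
        (Finset.mem_insert.1 hs).elim hbs.ne' fun hs => (hb s hs).not_gt hbs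
      simp [hbt, hbs, hsT]

-- Each `t₀` is a closed condition on the selection, finitely many are solved by a finite path,
-- and the product of the finite discrete spaces `Perm ι` is compact.
theorem exists_perm_selection {α ι β : Type*} [LinearOrder α] [NoMinOrder α] [NoMaxOrder α]
    [TopologicalSpace α] [OrderTopology α] [Finite ι] {L R : α → ι → β} {τ : α → Perm ι}
    (hτ : ∀ t, R t ∘ τ t = L t) (hL : ∀ t₀, ∀ᶠ t in 𝓝[<] t₀, L t₀ ∘ τ t = L t₀)
    (hR : ∀ t₀, ∀ᶠ t in 𝓝[>] t₀, R t₀ ∘ τ t = R t₀) :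
    ∃ σ : α → Perm ι, ∀ t₀, (∀ᶠ t in 𝓝[<] t₀, L t₀ ∘ σ t = L t₀ ∘ σ t₀) ∧
      ∀ᶠ t in 𝓝[>] t₀, R t₀ ∘ σ t = L t₀ ∘ σ t₀ := by
  classical
  choose a ha hLa using fun t₀ => mem_nhdsLT_iff_exists_Ioo_subset.1 (hL t₀)
  choose b hb hRb using fun t₀ => mem_nhdsGT_iff_exists_Ioo_subset.1 (hR t₀)
  let _ : TopologicalSpace (Perm ι) := ⊥
  have : DiscreteTopology (Perm ι) := ⟨rfl⟩
  let K (t₀ : α) : Set (α → Perm ι) :=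
    {σ | (∀ t ∈ Ioo (a t₀) t₀, L t₀ ∘ σ t = L t₀ ∘ σ t₀) ∧
      ∀ t ∈ Ioo t₀ (b t₀), R t₀ ∘ σ t = L t₀ ∘ σ t₀}
  have hclosed (t t₀ : α) (p : Perm ι → Perm ι → Prop) :
      IsClosed {σ : α → Perm ι | p (σ t) (σ t₀)} :=
    (isClosed_discrete {q : Perm ι × Perm ι | p q.1 q.2}).preimage
      (by fun_prop : Continuous fun σ : α → Perm ι => (σ t, σ t₀))
  have hK (t₀ : α) : IsClosed (K t₀) := by
    refine IsClosed.and ?_ ?_ <;> simp only [Set.ofPred_forall]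
    · exact isClosed_biInter fun t _ => hclosed t t₀ fun σ σ₀ => L t₀ ∘ σ = L t₀ ∘ σ₀
    · exact isClosed_biInter fun t _ => hclosed t t₀ fun σ σ₀ => R t₀ ∘ σ = L t₀ ∘ σ₀
  have hfinite (T : Finset α) : (univ ∩ ⋂ t₀ ∈ T, K t₀).Nonempty := by
    obtain ⟨σ, hσ⟩ := exists_perm_path τ T
    refine ⟨σ, mem_univ _, mem_iInter₂.2 fun t₀ ht₀ => ⟨fun t ht => ?_, fun t ht => ?_⟩⟩
    · rw [hσ t t₀ ht.2 (L t₀) fun s _ hs => hLa t₀ ⟨ht.1.trans hs.1, hs.2⟩]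
      split_ifs
      · exact (congrArg (· ∘ σ t) (hLa t₀ ht)).symm
      · rfl
    · rw [hσ t₀ t ht.1 (R t₀) fun s _ hs => hRb t₀ ⟨hs.1, hs.2.trans ht.2⟩, if_pos ht₀,
        ← Function.comp_assoc, hτ]
  obtain ⟨σ, -, hσ⟩ := isCompact_univ.inter_iInter_nonempty K hK hfinite
  exact ⟨σ, fun t₀ => ⟨mem_of_superset (Ioo_mem_nhdsLT (ha t₀)) (mem_iInter.1 hσ t₀).1,
    mem_of_superset (Ioo_mem_nhdsGT (hb t₀)) (mem_iInter.1 hσ t₀).2⟩⟩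

variable {E : Type*} [NormedAddCommGroup E] [NormedSpace ℝ E] {s : Set ℝ} {t₀ : ℝ}

lemma eventually_eq_imp_eq_and_deriv_eq {f g : ℝ → E} {f' g' : E} (ht₀ : t₀ ∉ s)
    (hf : HasDerivWithinAt f f' s t₀) (hg : HasDerivWithinAt g g' s t₀) :
    ∀ᶠ t in 𝓝[s] t₀, f t = g t → f t₀ = g t₀ ∧ f' = g' := by
  have hfg := hf.sub hg
  by_cases hval : f t₀ = g t₀
  · by_cases hder : f' = g'
    · exact .of_forall fun _ _ => ⟨hval, hder⟩
    · have hne := hfg.eventually_ne (c := 0) (sub_ne_zero.2 hder)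
      rw [sdiff_singleton_eq_self ht₀] at hne
      exact hne.mono fun t ht h => absurd (sub_eq_zero.2 h) ht
  · exact (hfg.continuousWithinAt.eventually_ne (sub_ne_zero.2 hval)).mono
      fun t ht h => absurd (sub_eq_zero.2 h) ht

lemma hasDerivWithinAt_selection {ι : Type*} [Finite ι] {x : ι → ℝ → E} {x' : ι → E} {v : E}
    {k : ℝ → ι} (ht₀ : t₀ ∉ s) (hx : ∀ i, HasDerivWithinAt (x i) (x' i) s t₀)
    (hk : ∀ᶠ t in 𝓝[s] t₀, x (k t) t₀ = x (k t₀) t₀ ∧ x' (k t) = v) :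
    HasDerivWithinAt (fun t => x (k t) t) v s t₀ := by
  rw [hasDerivWithinAt_iff_tendsto_slope' ht₀]
  refine fun U hU => mem_map.2 ?_
  have hslopes : ∀ᶠ t in 𝓝[s] t₀, ∀ i, x' i = v → slope (x i) t₀ t ∈ U :=
    eventually_all.2 fun i => eventually_imp_distrib_left.2 fun hi =>
      (hasDerivWithinAt_iff_tendsto_slope' ht₀).1 (hx i) (hi ▸ hU)
  filter_upwards [hslopes, hk] with t hslope ⟨hval, hder⟩
  have := hslope (k t) hder
  rwa [slope, hval] at this

theorem exists_perm_differentiable {ι : Type*} [Finite ι] {x : ι → ℝ → E} {l r : ℝ → ι → E}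
    (hl : ∀ t i, HasDerivWithinAt (x i) (l t i) (Iio t) t)
    (hr : ∀ t i, HasDerivWithinAt (x i) (r t i) (Ioi t) t)
    (hlr : ∀ t, ∃ τ : Perm ι, ∀ i, x (τ i) t = x i t ∧ r t (τ i) = l t i) :
    ∃ σ : ℝ → Perm ι, ∀ i, Differentiable ℝ fun t => x (σ t i) t := by
  choose τ hτ using hlr
  obtain ⟨σ, hσ⟩ := exists_perm_selection (τ := τ)
    (L := fun t i => (x i t, l t i)) (R := fun t i => (x i t, r t i))
    (fun t => funext fun i => Prod.ext (hτ t i).1 (hτ t i).2)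
    (fun t₀ => (eventually_all.2 fun i => eventually_all.2 fun j =>
      eventually_eq_imp_eq_and_deriv_eq self_notMem_Iio (hl t₀ i) (hl t₀ j)).mono fun t ht =>
        funext fun i => Prod.ext_iff.2 (ht _ _ (hτ t i).1))
    (fun t₀ => (eventually_all.2 fun i => eventually_all.2 fun j =>
      eventually_eq_imp_eq_and_deriv_eq self_notMem_Ioi (hr t₀ i) (hr t₀ j)).mono fun t ht =>
        funext fun i => Prod.ext_iff.2 (ht _ _ (hτ t i).1))
  refine ⟨σ, fun i t₀ => ?_⟩
  have hleft : HasDerivWithinAt (fun t => x (σ t i) t) (l t₀ (σ t₀ i)) (Iio t₀) t₀ :=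
    hasDerivWithinAt_selection (k := fun t => σ t i) self_notMem_Iio (hl t₀)
      ((hσ t₀).1.mono fun t ht => Prod.ext_iff.1 (congrFun ht i))
  have hright : HasDerivWithinAt (fun t => x (σ t i) t) (l t₀ (σ t₀ i)) (Ioi t₀) t₀ :=
    hasDerivWithinAt_selection (k := fun t => σ t i) self_notMem_Ioi (hr t₀)
      ((hσ t₀).2.mono fun t ht => Prod.ext_iff.1 (congrFun ht i))
  have hboth := hleft.union hright
  rw [Iio_union_Ioi, compl_eq_univ_sdiff, hasDerivWithinAt_sdiff_singleton,
    hasDerivWithinAt_univ] at hboth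
  exact hboth.differentiableAt

end Selection

section PermuteRoots

variable {ι : Type*} [Fintype ι]

lemma exists_perm_comp_eq_of_map_eq {α : Type*} {z w : ι → α}
    (h : Finset.univ.val.map z = Finset.univ.val.map w) : ∃ σ : Perm ι, z ∘ σ = w := by
  classical
  have hcard (c : α) : Fintype.card {i // w i = c} = Fintype.card {i // z i = c} := by
    have hcount := congrArg (Multiset.count c) h
    rw [Multiset.count_map, Multiset.count_map] at hcount
    simp only [eq_comm (a := c)] at hcount
    rw [Fintype.card_subtype, Fintype.card_subtype]
    exact hcount.symm
  exact ⟨Equiv.ofFiberEquiv fun c => Fintype.equivOfCardEq (hcard c),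
    funext (Equiv.ofFiberEquiv_map _)⟩

lemma exists_perm_of_prod_sub_eq {R : Type*} [CommRing R] [IsDomain R] [Infinite R] {z w : ι → R}
    (h : ∀ μ, ∏ i, (μ - z i) = ∏ i, (μ - w i)) : ∃ σ : Perm ι, z ∘ σ = w := by
  refine exists_perm_comp_eq_of_map_eq ?_
  have hpoly : ∏ i, (Polynomial.X - Polynomial.C (z i)) =
      ∏ i, (Polynomial.X - Polynomial.C (w i)) :=
    Polynomial.funext fun μ => by simpa [Polynomial.eval_prod] using h μ
  have hroots (y : ι → R) : (∏ i, (Polynomial.X - Polynomial.C (y i))).roots =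
      Finset.univ.val.map y := by
    rw [← Polynomial.roots_multiset_prod_X_sub_C (Finset.univ.val.map y), Multiset.map_map]
    rfl
  rw [← hroots, hpoly, hroots]

lemma exists_perm_of_prod_fiber_sub_eq {α R : Type*} [DecidableEq α] [CommRing R] [IsDomain R]
    [Infinite R] {c : ι → α} {z w : ι → R}
    (h : ∀ a μ, ∏ i : {i // c i = a}, (μ - z i) = ∏ i : {i // c i = a}, (μ - w i)) :
    ∃ σ : Perm ι, ∀ i, c (σ i) = c i ∧ z (σ i) = w i := by
  choose σ hσ using fun a => exists_perm_of_prod_sub_eq (h a)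
  exact ⟨Equiv.ofFiberEquiv σ, fun i => ⟨Equiv.ofFiberEquiv_map σ i, congrFun (hσ (c i)) ⟨i, rfl⟩⟩⟩

lemma eq_of_monotone_of_comp_perm_eq {ι β : Type*} [Finite ι] [LinearOrder ι] [PartialOrder β]
    {z w : ι → β}
    (hz : Monotone z) (hw : Monotone w) {σ : Perm ι} (h : z ∘ σ = w) : z = w := by
  subst h
  cases nonempty_fintype ι
  let e := Fintype.orderIsoFinOfCardEq ι rfl
  have hsort := Tuple.unique_monotone (f := z ∘ e) (σ := 1)
    (τ := (e.toEquiv.trans σ).trans e.symm.toEquiv) (hz.comp e.monotone)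
    (by simpa [Function.comp_def] using hw.comp e.monotone)
  ext1 i
  simpa using congrFun hsort (e.symm i)

variable [LinearOrder ι]

lemma injOn_prod_sub_monotone {R : Type*} [CommRing R] [IsDomain R] [Infinite R]
    [PartialOrder R] : InjOn (fun (z : ι → R) μ => ∏ i, (μ - z i)) {z | Monotone z} := by
  intro z hz w hw h
  obtain ⟨σ, hσ⟩ := exists_perm_of_prod_sub_eq (congrFun h)
  exact eq_of_monotone_of_comp_perm_eq hz hw hσ

lemma injOn_prod_sub_antitone {R : Type*} [CommRing R] [IsDomain R] [Infinite R]
    [PartialOrder R] : InjOn (fun (z : ι → R) μ => ∏ i, (μ - z i)) {z | Antitone z} := by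
  intro z hz w hw h
  obtain ⟨σ, hσ⟩ := exists_perm_of_prod_sub_eq (congrFun h)
  exact eq_of_monotone_of_comp_perm_eq (β := Rᵒᵈ) hz.dual_right hw.dual_right hσ

end PermuteRoots

section Convergence

variable {α : Type*} {l : Filter α} [l.NeBot]

lemma exists_tendsto_of_injOn {X Y : Type*} [TopologicalSpace X] [TopologicalSpace Y] [T2Space Y]
    {f : X → Y} {K : Set X} {u : α → X} {c : Y} (hK : IsCompact K) (hf : Continuous f)
    (hinj : InjOn f K) (hu : ∀ᶠ t in l, u t ∈ K) (hc : Tendsto (f ∘ u) l (𝓝 c)) :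
    ∃ z, Tendsto u l (𝓝 z) := by
  have hcluster {z : X} (hz : MapClusterPt z l u) : f z = c :=
    eq_of_nhds_neBot ((hz.continuousAt_comp hf.continuousAt).clusterPt.mono hc)
  obtain ⟨z, hzK, hz⟩ := hK.exists_mapClusterPt_of_frequently hu.frequently
  exact ⟨z, hK.tendsto_nhds_of_unique_mapClusterPt hu fun w hwK hw =>
    hinj hwK hzK ((hcluster hw).trans (hcluster hz).symm)⟩

lemma exists_tendsto_of_tendsto_prod_sub {ι : Type*} [Fintype ι] {Y : α → ι → ℝ} {κ : ℝ → ℝ}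
    {S : Set (ι → ℝ)} (hS : IsClosed S) (hinj : InjOn (fun (z : ι → ℝ) μ => ∏ i, (μ - z i)) S)
    (hYS : ∀ᶠ t in l, Y t ∈ S) (hY : Y =O[l] fun _ => (1 : ℝ))
    (hκ : ∀ μ, Tendsto (fun t => ∏ i, (μ - Y t i)) l (𝓝 (κ μ))) : ∃ z, Tendsto Y l (𝓝 z) := by
  obtain ⟨M, hM⟩ := (isBigO_one_iff ℝ).1 hY
  refine exists_tendsto_of_injOn (f := fun (z : ι → ℝ) μ => ∏ i, (μ - z i))
    ((isCompact_closedBall (0 : ι → ℝ) M).inter_left hS) (by fun_prop)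
    (hinj.mono inter_subset_left) ?_ (tendsto_pi_nhds.2 hκ)
  filter_upwards [hYS, eventually_map.1 hM] with t htS htM
  exact ⟨htS, mem_closedBall_zero_iff.2 htM⟩

end Convergence

section SignedMonic

open Polynomial

variable {R S : Type*} [CommRing R] [CommRing S] {n : ℕ}

/-- The monic polynomial `X ^ n - b₁ X ^ (n - 1) + b₂ X ^ (n - 2) - …`, the signs being chosen so
that the coefficient `b j`, indexed from `0`, is the elementary symmetric function of degree `j + 1`
of the roots. -/
noncomputable def signedMonic (b : Fin n → R) : R[X] :=
  X ^ n + ∑ j : Fin n, C ((-1) ^ ((j : ℕ) + 1) * b j) * X ^ (n - ((j : ℕ) + 1))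

lemma eval_signedMonic (b : Fin n → R) (x : R) : (signedMonic b).eval x =
    x ^ n + ∑ j : Fin n, (-1) ^ ((j : ℕ) + 1) * b j * x ^ (n - ((j : ℕ) + 1)) := by
  simp [signedMonic, eval_finsetSum]

lemma map_signedMonic (f : R →+* S) (b : Fin n → R) :
    (signedMonic b).map f = signedMonic fun j => f (b j) := by
  simp [signedMonic, Polynomial.map_sum]

lemma degree_signedMonic_sub_X_pow_lt (b : Fin n → R) :
    (signedMonic b - X ^ n).degree < (n : WithBot ℕ) := by
  rw [signedMonic, add_sub_cancel_left, ← mem_degreeLT]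
  refine sum_mem fun j _ => mem_degreeLT.2 ((degree_C_mul_X_pow_le _ _).trans_lt ?_)
  exact_mod_cast (by lia : n - ((j : ℕ) + 1) < n)

lemma monic_signedMonic (b : Fin n → R) : (signedMonic b).Monic := by
  simpa using monic_X_pow_add (degree_signedMonic_sub_X_pow_lt b)

lemma natDegree_signedMonic [Nontrivial R] (b : Fin n → R) : (signedMonic b).natDegree = n := by
  refine natDegree_eq_of_degree_eq_some ?_
  have hlt := degree_signedMonic_sub_X_pow_lt b
  rw [← degree_X_pow (R := R) n] at hlt
  simpa using degree_add_eq_right_of_degree_lt hlt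

lemma coeff_signedMonic (b : Fin n → R) (j : Fin n) :
    (signedMonic b).coeff (n - ((j : ℕ) + 1)) = (-1) ^ ((j : ℕ) + 1) * b j := by
  rw [signedMonic, coeff_add, coeff_X_pow, if_neg (by lia), zero_add, finsetSum_coeff,
    Finset.sum_eq_single j _ (by simp), coeff_C_mul_X_pow, if_pos rfl]
  intro i _ hij
  rw [coeff_C_mul_X_pow, if_neg fun h => hij (Fin.ext (by lia))]

lemma signedMonic_injective : Function.Injective (signedMonic : (Fin n → R) → R[X]) := by
  intro b c h
  ext j
  have hcoeff := congrArg (coeff · (n - ((j : ℕ) + 1))) h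
  simp only [coeff_signedMonic] at hcoeff
  exact (isUnit_one.neg.pow _).mul_left_cancel hcoeff

lemma signedMonic_esymm {ι : Type*} [Fintype ι] (z : ι → R) :
    signedMonic (fun j : Fin (Fintype.card ι) =>
      MvPolynomial.aeval z (MvPolynomial.esymm ι R ((j : ℕ) + 1))) = ∏ i, (X - C (z i)) := by
  have hvieta := (Finset.univ.val.map z).prod_X_sub_X_eq_sum_esymm
  simp only [Multiset.map_map, Multiset.card_map, Finset.card_val, Finset.card_univ] at hvieta
  rw [show ∏ i, (X - C (z i)) = _ from hvieta, Finset.sum_range_succ', add_comm, signedMonic,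
    ← Fin.sum_univ_eq_sum_range (fun j => (-1) ^ (j + 1) *
      (C ((Finset.univ.val.map z).esymm (j + 1)) * X ^ (Fintype.card ι - (j + 1))))]
  simp [MvPolynomial.aeval_esymm_eq_multiset_esymm, mul_assoc, Multiset.esymm]

lemma exists_eq_prod_X_sub_C {K : Type*} [Field K] {p : K[X]} (hp : p.Monic) (hs : p.Splits)
    (hn : p.natDegree = n) : ∃ x : Fin n → K, p = ∏ i, (X - C (x i)) := by
  have hcard : p.roots.toList.length = n := by
    rw [Multiset.length_toList, ← hs.natDegree_eq_card_roots, hn]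
  subst hcard
  refine ⟨fun i => p.roots.toList[i], (hs.eq_prod_roots_of_monic hp).trans ?_⟩
  rw [← Multiset.prod_map_toList]
  exact (Fin.prod_univ_fun_getElem p.roots.toList fun r => X - C r).symm

lemma splits_signedMonic {b : Fin n → ℝ}
    (h : ∀ z : ℂ, (signedMonic fun j => (b j : ℂ)).eval z = 0 → z.im = 0) :
    (signedMonic b).Splits := by
  refine Splits.of_splits_map (algebraMap ℝ ℂ) (IsAlgClosed.splits _) fun z hz => ?_
  rw [map_signedMonic] at hz
  have hreal : z.im = 0 := h z (isRoot_of_mem_roots hz)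
  exact ⟨z.re, Complex.ext (by simp) (by simp [hreal])⟩

end SignedMonic

section SymmContDiff

variable {E ι : Type*} [NormedAddCommGroup E] [NormedSpace ℝ E] {k : WithTop ℕ∞}
  {x : E → ι → ℝ}

/-- The image of `x` in the orbit space of `ι → ℝ` under permutations is of class `C^k`: all
symmetric polynomials in the entries of `x` are. -/
def SymmContDiff (k : WithTop ℕ∞) (x : E → ι → ℝ) : Prop :=
  ∀ p : MvPolynomial ι ℝ, p.IsSymmetric → ContDiff ℝ k fun t => MvPolynomial.aeval (x t) p

namespace SymmContDiff

lemma of_le {m : WithTop ℕ∞} (hx : SymmContDiff k x) (hm : m ≤ k) : SymmContDiff m x :=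
  fun p hp => (hx p hp).of_le hm

lemma comp_perm (hx : SymmContDiff k x) (σ : E → Perm ι) :
    SymmContDiff k fun t => x t ∘ σ t := fun p hp => by
  simpa only [← MvPolynomial.aeval_rename, hp _] using hx p hp

variable [Fintype ι]

-- Newton's theorem: every symmetric polynomial is a polynomial in the elementary ones.
lemma of_esymm (hx : ∀ j : Fin (Fintype.card ι), ContDiff ℝ k fun t =>
      MvPolynomial.aeval (x t) (MvPolynomial.esymm ι ℝ ((j : ℕ) + 1))) : SymmContDiff k x := by
  intro p hp
  obtain ⟨q, hq⟩ := MvPolynomial.esymmAlgHom_surjective ℝ le_rfl ⟨p, hp⟩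
  have hpq : MvPolynomial.aeval (fun j : Fin (Fintype.card ι) =>
      MvPolynomial.esymm ι ℝ ((j : ℕ) + 1)) q = p := by
    rw [← MvPolynomial.esymmAlgHom_apply, hq]
  have hq : ContDiff ℝ k fun b : Fin (Fintype.card ι) → ℝ => MvPolynomial.eval b q :=
    (AnalyticOnNhd.eval_mvPolynomial q).contDiff
  simp only [← hpq, MvPolynomial.comp_aeval_apply]
  exact hq.comp (contDiff_pi.2 hx)

lemma of_signedMonic_eq_prod {n : ℕ} {b : E → Fin n → ℝ} (hn : Fintype.card ι = n)
    (hb : ∀ j, ContDiff ℝ k (b · j))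
    (hx : ∀ t, signedMonic (b t) = ∏ i, (Polynomial.X - Polynomial.C (x t i))) :
    SymmContDiff k x := by
  subst hn
  have hesymm (t : E) (j : Fin (Fintype.card ι)) :
      MvPolynomial.aeval (x t) (MvPolynomial.esymm ι ℝ ((j : ℕ) + 1)) = b t j :=
    congrFun (signedMonic_injective ((signedMonic_esymm (x t)).trans (hx t).symm)) j
  exact of_esymm fun j => by simpa only [hesymm] using hb j

lemma sum_eval (hx : SymmContDiff k x) (χ : Polynomial ℝ) :
    ContDiff ℝ k fun t => ∑ i, χ.eval (x t i) := by
  have hsymm : (∑ i, Polynomial.aeval (MvPolynomial.X i) χ : MvPolynomial ι ℝ).IsSymmetric := by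
    intro e
    simp only [map_sum, ← Polynomial.aeval_algHom_apply, MvPolynomial.rename_X]
    exact Equiv.sum_comp e fun i => Polynomial.aeval (MvPolynomial.X i : MvPolynomial ι ℝ) χ
  simpa only [map_sum, ← Polynomial.aeval_algHom_apply, MvPolynomial.aeval_X,
    Polynomial.coe_aeval_eq_eval] using hx _ hsymm

lemma prod_sub (hx : SymmContDiff k x) : ContDiff ℝ k fun q : ℝ × E => ∏ i, (q.1 - x q.2 i) := by
  have heval (q : ℝ × E) := congrArg (Polynomial.eval q.1) (signedMonic_esymm (x q.2))
  simp only [eval_signedMonic, Polynomial.eval_prod, Polynomial.eval_sub, Polynomial.eval_X,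
    Polynomial.eval_C] at heval
  simp only [← heval]
  refine (contDiff_fst.pow _).add (ContDiff.sum fun j _ => ?_)
  exact (contDiff_const.mul ((hx _ (MvPolynomial.esymm_isSymmetric ι ℝ _)).comp contDiff_snd)).mul
    (contDiff_fst.pow _)

end SymmContDiff

namespace SymmContDiff

variable [Finite ι]

lemma continuous_of_monotone [LinearOrder ι] (hx : SymmContDiff k x)
    (hmono : ∀ t, Monotone (x t)) : Continuous x := by
  cases nonempty_fintype ι
  refine continuous_iff_continuousAt.2 fun t₀ => ?_
  have hsum : Continuous fun t => ∑ i, x t i ^ 2 :=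
    (hx.sum_eval (Polynomial.X ^ 2)).continuous.congr fun t => by simp
  have hbounded (i : ι) : (fun t => x t i) =O[𝓝 t₀] fun _ => (1 : ℝ) := by
    have hle : ((fun t => x t i) ^ 2) =O[𝓝 t₀] fun t => ∑ i, x t i ^ 2 := by
      refine .of_norm_le fun t => ?_
      rw [Pi.pow_apply, Real.norm_of_nonneg (sq_nonneg _)]
      exact Finset.single_le_sum (f := fun i => x t i ^ 2) (fun j _ => sq_nonneg _)
        (Finset.mem_univ i)
    exact .of_pow two_ne_zero ((hle.trans ((hsum.tendsto t₀).isBigO_one ℝ)).congr_right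
      fun _ => (one_pow 2).symm)
  obtain ⟨z, hz⟩ := exists_tendsto_of_tendsto_prod_sub isClosed_monotone injOn_prod_sub_monotone
    (.of_forall hmono) (isBigO_pi.2 hbounded) fun μ =>
      (hx.prod_sub.continuous.comp (by fun_prop : Continuous fun t => (μ, t))).tendsto t₀
  exact continuousAt_of_tendsto_nhds hz

variable {x : ℝ → ι → ℝ}

-- `∑ j, χ (x t j)` is a nonnegative `C^2` function of `t` which vanishes at `t₀`.
lemma eval_isBigO_sq (hx : SymmContDiff 2 x) {χ : Polynomial ℝ} (hχ : ∀ y, 0 ≤ χ.eval y) {t₀ : ℝ}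
    (hzero : ∀ i, χ.eval (x t₀ i) = 0) (i : ι) :
    (fun t => χ.eval (x t i)) =O[𝓝[≠] t₀] fun t => (t - t₀) ^ 2 := by
  cases nonempty_fintype ι
  have hmin : IsLocalMin (fun t => ∑ j, χ.eval (x t j)) t₀ := .of_forall fun t => by
    simpa only [hzero, Finset.sum_const_zero] using Finset.sum_nonneg fun j _ => hχ (x t j)
  have htaylor := tendsto_div_pow_of_iteratedDeriv_eq_zero (m := 2) (hx.sum_eval χ) (z := t₀)
    fun j hj => by
      interval_cases j
      · simp [hzero]
      · simpa only [iteratedDeriv_one] using hmin.deriv_eq_zero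
  refine .trans (.of_norm_le fun t => ?_) (isBigO_of_div_tendsto_nhds ?_ _ htaylor)
  · rw [Real.norm_of_nonneg (hχ _)]
    exact Finset.single_le_sum (f := fun j => χ.eval (x t j)) (fun j _ => hχ _) (Finset.mem_univ i)
  · filter_upwards [self_mem_nhdsWithin] with t ht h
    exact absurd (pow_eq_zero_iff two_ne_zero |>.1 h) (sub_ne_zero.2 ht)

lemma isBigO_sub (hx : SymmContDiff 2 x) (hcont : Continuous x) (t₀ : ℝ) (i : ι) :
    (fun t => x t i - x t₀ i) =O[𝓝[≠] t₀] fun t => t - t₀ := by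
  classical
  cases nonempty_fintype ι
  let R := Finset.univ.image (x t₀)
  have hR (j : ι) : x t₀ j ∈ R := Finset.mem_image_of_mem _ (Finset.mem_univ j)
  have hsq := hx.eval_isBigO_sq (χ := (∏ ρ ∈ R, (Polynomial.X - Polynomial.C ρ)) ^ 2) (t₀ := t₀)
    (fun y => by simpa using sq_nonneg _)
    (fun j => by simpa [Polynomial.eval_prod] using Finset.prod_eq_zero (hR j) (sub_self _)) i
  have hprod : (fun t => ∏ ρ ∈ R, (x t i - ρ)) =O[𝓝[≠] t₀] fun t => t - t₀ :=
    .of_pow two_ne_zero (by simpa [Pi.pow_def, Polynomial.eval_prod] using hsq)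
  have hcofactor : Tendsto (fun t => ∏ ρ ∈ R.erase (x t₀ i), (x t i - ρ)) (𝓝[≠] t₀)
      (𝓝 (∏ ρ ∈ R.erase (x t₀ i), (x t₀ i - ρ))) :=
    ((by fun_prop : Continuous fun t => ∏ ρ ∈ R.erase (x t₀ i), (x t i - ρ)).tendsto
      t₀).mono_left nhdsWithin_le_nhds
  have hne : ∏ ρ ∈ R.erase (x t₀ i), (x t₀ i - ρ) ≠ 0 :=
    Finset.prod_ne_zero_iff.2 fun ρ hρ => sub_ne_zero.2 (Finset.ne_of_mem_erase hρ).symm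
  simp only [← Finset.prod_erase_mul R _ (hR i)] at hprod
  refine ((isBigO_mul_iff_isBigO_div (hcofactor.eventually_ne hne)).1 hprod).trans ?_
  simpa only [div_eq_mul_inv, mul_one] using
    (isBigO_refl (fun t => t - t₀) _).mul ((hcofactor.inv₀ hne).isBigO_one ℝ)

end SymmContDiff

end SymmContDiff

section OneSidedDerivatives

variable {ι : Type*} [Fintype ι] {x : ℝ → ι → ℝ} {t₀ : ℝ}

lemma prod_sub_div_pow_eq_prod_sub_slope {f : ι → ℝ → ℝ} {ρ μ t : ℝ} (hf : ∀ i, f i t₀ = ρ)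
    (ht : t ≠ t₀) : (∏ i, (ρ + μ * (t - t₀) - f i t)) / (t - t₀) ^ Fintype.card ι =
      ∏ i, (μ - slope (f i) t₀ t) := by
  have ht' : t - t₀ ≠ 0 := sub_ne_zero.2 ht
  rw [← Finset.card_univ, ← Finset.prod_const, ← Finset.prod_div_distrib]
  refine Finset.prod_congr rfl fun i _ => ?_
  rw [slope_def_field, hf]
  field_simp
  ring

-- The roots outside the cluster contribute a factor with a nonzero limit at `t₀`, so the product
-- over the cluster inherits a Taylor expansion from the product over all roots.
lemma SymmContDiff.exists_tendsto_prod_sub_slope (hx : SymmContDiff (Fintype.card ι) x)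
    (hlip : ∀ i, (fun t => x t i - x t₀ i) =O[𝓝[≠] t₀] fun t => t - t₀) (ρ μ : ℝ) :
    ∃ κ, Tendsto (fun t => ∏ i : {i // x t₀ i = ρ}, (μ - slope (x · i) t₀ t))
      (𝓝[≠] t₀) (𝓝 κ) := by
  let m := Fintype.card {i // x t₀ i = ρ}
  let y (t : ℝ) := ρ + μ * (t - t₀)
  have hcluster : (fun t => ∏ i : {i // x t₀ i = ρ}, (y t - x t i)) =O[𝓝[≠] t₀]
      fun t => (t - t₀) ^ m := by
    have hfactor (i : {i // x t₀ i = ρ}) : (fun t => y t - x t i) =O[𝓝[≠] t₀] fun t => t - t₀ :=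
      (((isBigO_refl (fun t => t - t₀) _).const_mul_left μ).sub (hlip i)).congr_left fun t => by
        rw [i.2]
        ring
    simpa [m] using IsBigO.finsetProd fun i (_ : i ∈ Finset.univ) => hfactor i
  have hrest : Tendsto (fun t => ∏ i : {i // x t₀ i ≠ ρ}, (y t - x t i)) (𝓝[≠] t₀)
      (𝓝 (∏ i : {i // x t₀ i ≠ ρ}, (ρ - x t₀ i))) := by
    have hsub : Tendsto (fun t => t - t₀) (𝓝[≠] t₀) (𝓝 0) :=
      tendsto_sub_nhds_zero_iff.2 nhdsWithin_le_nhds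
    refine tendsto_finsetProd _ fun i _ => .sub ?_
      (tendsto_sub_nhds_zero_iff.1 ((hlip i).trans_tendsto hsub))
    simpa using (hsub.const_mul μ).const_add ρ
  have hrest_ne : ∏ i : {i // x t₀ i ≠ ρ}, (ρ - x t₀ i) ≠ 0 :=
    Finset.prod_ne_zero_iff.2 fun i _ => sub_ne_zero.2 i.2.symm
  have hsplit (t : ℝ) := Fintype.prod_subtype_mul_prod_subtype (x t₀ · = ρ) fun i => y t - x t i
  have hsmooth : ContDiff ℝ m fun t => ∏ i, (y t - x t i) :=
    (hx.prod_sub.comp (by fun_prop : ContDiff ℝ _ fun t => (y t, t))).of_le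
      (by exact_mod_cast Fintype.card_subtype_le _)
  have htaylor := tendsto_div_pow_of_iteratedDeriv_eq_zero hsmooth
    (iteratedDeriv_eq_zero_of_isBigO hsmooth (z := t₀) (by
      simpa only [hsplit, mul_one] using hcluster.mul (hrest.isBigO_one ℝ)))
  refine ⟨_, (htaylor.div hrest hrest_ne).congr' ?_⟩
  filter_upwards [hrest.eventually_ne hrest_ne, self_mem_nhdsWithin] with t hne ht
  rw [Pi.div_apply, ← hsplit, mul_div_right_comm, mul_div_cancel_right₀ _ hne]
  exact prod_sub_div_pow_eq_prod_sub_slope (f := fun (i : {i // x t₀ i = ρ}) t => x t i)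
    (fun i => i.2) ht

lemma SymmContDiff.exists_tendsto_slope (hx : SymmContDiff (Fintype.card ι) x)
    (hlip : ∀ i, (fun t => x t i - x t₀ i) =O[𝓝[≠] t₀] fun t => t - t₀)
    {l : Filter ℝ} [l.NeBot] (hl : l ≤ 𝓝[≠] t₀) {ρ : ℝ} {S : Set ({i // x t₀ i = ρ} → ℝ)}
    (hS : IsClosed S) (hinj : InjOn (fun z μ => ∏ i, (μ - z i)) S)
    (hslope : ∀ᶠ t in l, (fun i : {i // x t₀ i = ρ} => slope (x · i) t₀ t) ∈ S)
    (i : {i // x t₀ i = ρ}) : ∃ d, Tendsto (slope (x · i) t₀) l (𝓝 d) := by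
  choose κ hκ using hx.exists_tendsto_prod_sub_slope hlip ρ
  have hbounded (i : ι) : slope (x · i) t₀ =O[𝓝[≠] t₀] fun _ => (1 : ℝ) := by
    refine (((isBigO_refl (fun t => (t - t₀)⁻¹) _).mul (hlip i)).congr' (.of_forall fun t => ?_) ?_)
    · rw [slope_def_field, div_eq_inv_mul]
    · filter_upwards [self_mem_nhdsWithin] with t ht using inv_mul_cancel₀ (sub_ne_zero.2 ht)
  obtain ⟨z, hz⟩ := exists_tendsto_of_tendsto_prod_sub hS hinj hslope
    (isBigO_pi.2 fun i => (hbounded i).mono hl) fun μ => (hκ μ).mono_left hl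
  exact ⟨z i, tendsto_pi_nhds.1 hz i⟩

lemma SymmContDiff.exists_hasDerivWithinAt_Ioi [LinearOrder ι]
    (hx : SymmContDiff (Fintype.card ι) x) (hmono : ∀ t, Monotone (x t))
    (hlip : ∀ i, (fun t => x t i - x t₀ i) =O[𝓝[≠] t₀] fun t => t - t₀) (i : ι) :
    ∃ r, HasDerivWithinAt (x · i) r (Ioi t₀) t₀ := by
  simp only [hasDerivWithinAt_iff_tendsto_slope' self_notMem_Ioi]
  refine hx.exists_tendsto_slope hlip (nhdsGT_le_nhdsNE t₀) isClosed_monotone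
    injOn_prod_sub_monotone ?_ ⟨i, rfl⟩
  filter_upwards [self_mem_nhdsWithin] with t ht j k hjk
  simp only [slope_def_field, j.2, k.2]
  exact div_le_div_of_nonneg_right (sub_le_sub_right (hmono t hjk) _) (sub_pos.2 ht).le

lemma SymmContDiff.exists_hasDerivWithinAt_Iio [LinearOrder ι]
    (hx : SymmContDiff (Fintype.card ι) x) (hmono : ∀ t, Monotone (x t))
    (hlip : ∀ i, (fun t => x t i - x t₀ i) =O[𝓝[≠] t₀] fun t => t - t₀) (i : ι) :
    ∃ l, HasDerivWithinAt (x · i) l (Iio t₀) t₀ := by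
  simp only [hasDerivWithinAt_iff_tendsto_slope' self_notMem_Iio]
  refine hx.exists_tendsto_slope hlip (nhdsLT_le_nhdsNE t₀) isClosed_antitone
    injOn_prod_sub_antitone ?_ ⟨i, rfl⟩
  filter_upwards [self_mem_nhdsWithin] with t ht j k hjk
  simp only [slope_def_field, j.2, k.2]
  exact div_le_div_of_nonpos_of_le (sub_neg.2 ht).le (sub_le_sub_right (hmono t hjk) _)

lemma SymmContDiff.exists_perm_deriv_eq (hx : SymmContDiff (Fintype.card ι) x)
    (hlip : ∀ i, (fun t => x t i - x t₀ i) =O[𝓝[≠] t₀] fun t => t - t₀) {l r : ι → ℝ}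
    (hl : ∀ i, HasDerivWithinAt (x · i) (l i) (Iio t₀) t₀)
    (hr : ∀ i, HasDerivWithinAt (x · i) (r i) (Ioi t₀) t₀) :
    ∃ τ : Perm ι, ∀ i, x t₀ (τ i) = x t₀ i ∧ r (τ i) = l i := by
  simp only [hasDerivWithinAt_iff_tendsto_slope' self_notMem_Iio] at hl
  simp only [hasDerivWithinAt_iff_tendsto_slope' self_notMem_Ioi] at hr
  refine exists_perm_of_prod_fiber_sub_eq fun ρ μ => ?_
  obtain ⟨κ, hκ⟩ := hx.exists_tendsto_prod_sub_slope hlip ρ μ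
  have hlimit {v : ι → ℝ} {s : Filter ℝ} [s.NeBot] (hs : s ≤ 𝓝[≠] t₀)
      (hv : ∀ i, Tendsto (slope (x · i) t₀) s (𝓝 (v i))) :
      ∏ i : {i // x t₀ i = ρ}, (μ - v i) = κ :=
    tendsto_nhds_unique (tendsto_finsetProd _ fun i _ => (hv i).const_sub μ) (hκ.mono_left hs)
  rw [hlimit (nhdsGT_le_nhdsNE t₀) hr, hlimit (nhdsLT_le_nhdsNE t₀) hl]

end OneSidedDerivatives

lemma SymmContDiff.exists_perm_contDiff_one_of_monotone {ι : Type*} [Fintype ι] [LinearOrder ι]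
    {x : ℝ → ι → ℝ} (hx : SymmContDiff (Fintype.card ι) x) (hmono : ∀ t, Monotone (x t))
    (hι : 2 ≤ Fintype.card ι) :
    ∃ σ : ℝ → Perm ι, ∀ i, ContDiff ℝ 1 fun t => x t (σ t i) := by
  have hlip := (hx.of_le (by exact_mod_cast hι : (2 : WithTop ℕ∞) ≤ _)).isBigO_sub
    (hx.continuous_of_monotone hmono)
  choose l hl using fun t => hx.exists_hasDerivWithinAt_Iio hmono (hlip t)
  choose r hr using fun t => hx.exists_hasDerivWithinAt_Ioi hmono (hlip t)
  obtain ⟨σ, hσ⟩ := exists_perm_differentiable (x := fun i t => x t i) hl hr fun t =>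
    hx.exists_perm_deriv_eq (hlip t) (hl t) (hr t)
  exact ⟨σ, contDiff_one_of_contDiff_prod_sub hσ (hx.comp_perm σ).prod_sub⟩

theorem SymmContDiff.exists_perm_contDiff_one {n : ℕ} {x : ℝ → Fin n → ℝ} (hx : SymmContDiff n x) :
    ∃ σ : ℝ → Perm (Fin n), ∀ i, ContDiff ℝ 1 fun t => x t (σ t i) := by
  obtain hn | hn := lt_or_ge n 2
  · have := Fin.subsingleton_iff_le_one.2 (Nat.le_of_lt_succ hn)
    refine ⟨1, fun i => ?_⟩
    have hsymm : (MvPolynomial.X i : MvPolynomial (Fin n) ℝ).IsSymmetric := fun e => by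
      rw [MvPolynomial.rename_X, Subsingleton.elim (e i) i]
    simpa using (hx _ hsymm).of_le (by exact_mod_cast i.pos)
  · have hsorted := hx.comp_perm fun t => Tuple.sort (x t)
    rw [← Fintype.card_fin n] at hn
    obtain ⟨σ, hσ⟩ := exists_perm_contDiff_one_of_monotone (by rwa [Fintype.card_fin])
      (fun t => Tuple.monotone_sort (x t)) hn
    exact ⟨fun t => Tuple.sort (x t) * σ t, hσ⟩

/-- (Colombini–Orrú–Pernazza) If the coefficients `a j` of a curve of monic hyperbolic
polynomials are of class `C^n`, then the roots can be parameterized by `C^1`-functions. -/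
theorem roots_C1 (n : ℕ) (hn : 1 ≤ n) (a : Fin n → ℝ → ℝ)
    (ha : ∀ j, ContDiff ℝ n (a j))
    (hhyp : ∀ t : ℝ, ∀ z : ℂ,
      z ^ n + ∑ j : Fin n, (-1 : ℂ) ^ ((j : ℕ) + 1) * (a j t : ℂ) * z ^ (n - ((j : ℕ) + 1)) = 0 →
        z.im = 0) :
    ∃ lam : Fin n → ℝ → ℝ,
      (∀ j, ContDiff ℝ 1 (lam j)) ∧
      (∀ t x : ℝ,
        x ^ n + ∑ j : Fin n, (-1 : ℝ) ^ ((j : ℕ) + 1) * a j t * x ^ (n - ((j : ℕ) + 1)) =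
          ∏ j : Fin n, (x - lam j t)) := by
  simp only [← eval_signedMonic] at hhyp ⊢
  choose x hx using fun t => exists_eq_prod_X_sub_C (monic_signedMonic (a · t))
    (splits_signedMonic (hhyp t)) (natDegree_signedMonic _)
  have hsymm : SymmContDiff n x := .of_signedMonic_eq_prod (Fintype.card_fin n) ha hx
  obtain ⟨σ, hσ⟩ := hsymm.exists_perm_contDiff_one
  refine ⟨fun j t => x t (σ t j), hσ, fun t y => ?_⟩
  rw [hx, Polynomial.eval_prod, ← Equiv.prod_comp (σ t)]
  simp only [Polynomial.eval_sub, Polynomial.eval_X, Polynomial.eval_C]
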